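/- arXiv:2007.02740 — 4 statements merged into one kernel-verified Lean document; each statement's English description precedes it below -/
import Mathlib

section
/- Hard collection lemma: Let f : {0,1}^m → {0,1} be a non-constant monotone function, S ⊆ {0,1}^ℓ × 𝒪 a search problem, gd : Λ×Λ → {0,1} a gadget with Λ = {0,1}^t, and Π a protocol solving mKW_f ⊛ (S◇gd). Then every live transcript of Π supports a hard collection. -/
open Classical

noncomputable section

/-! ### Deterministic communication protocols -/

/-- A deterministic communication protocol: a finite binary protocol tree whose
leaves are labeled by outputs in `O`.  At a `nodeA` vertex Alice sends a bit
(computed from her input), at a `nodeB` vertex Bob sends a bit. -/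
inductive Protocol (X Y O : Type) : Type where
  | leaf : O → Protocol X Y O
  | nodeA : (X → Bool) → Protocol X Y O → Protocol X Y O → Protocol X Y O
  | nodeB : (Y → Bool) → Protocol X Y O → Protocol X Y O → Protocol X Y O

namespace Protocol

variable {X Y O : Type}

/-- The output of the protocol on an input pair. -/
def run : Protocol X Y O → X → Y → O
  | leaf o, _, _ => o
  | nodeA h p0 p1, x, y => if h x then run p1 x y else run p0 x y
  | nodeB h p0 p1, x, y => if h y then run p1 x y else run p0 x y

/-- Depth (communication complexity) of a protocol tree. -/
def depth : Protocol X Y O → ℕ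
  | leaf _ => 0
  | nodeA _ p0 p1 => max (depth p0) (depth p1) + 1
  | nodeB _ p0 p1 => max (depth p0) (depth p1) + 1

/-- Number of leaves (protocol size). -/
def leaves : Protocol X Y O → ℕ
  | leaf _ => 1
  | nodeA _ p0 p1 => leaves p0 + leaves p1
  | nodeB _ p0 p1 => leaves p0 + leaves p1

/-- `followsA p π x` : Alice's input `x` is consistent with the partial transcript `π`,
i.e. `x` belongs to the Alice-side `𝒳_π` of the rectangle associated with the vertex `π`. -/
def followsA : Protocol X Y O → List Bool → X → Prop
  | _, [], _ => True
  | leaf _, _ :: _, _ => False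
  | nodeA h p0 p1, b :: rest, x =>
      h x = b ∧ (if b then followsA p1 rest x else followsA p0 rest x)
  | nodeB _ p0 p1, b :: rest, x =>
      if b then followsA p1 rest x else followsA p0 rest x

/-- `followsB p π y` : Bob's input `y` is consistent with the partial transcript `π`,
i.e. `y` belongs to the Bob-side `𝒴_π` of the rectangle associated with the vertex `π`. -/
def followsB : Protocol X Y O → List Bool → Y → Prop
  | _, [], _ => True
  | leaf _, _ :: _, _ => False
  | nodeA _ p0 p1, b :: rest, y =>
      if b then followsB p1 rest y else followsB p0 rest y
  | nodeB h p0 p1, b :: rest, y =>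
      h y = b ∧ (if b then followsB p1 rest y else followsB p0 rest y)

/-- The subtree of the protocol reached by following a partial transcript. -/
def subtree : Protocol X Y O → List Bool → Option (Protocol X Y O)
  | p, [] => some p
  | leaf _, _ :: _ => none
  | nodeA _ p0 p1, b :: rest => if b then subtree p1 rest else subtree p0 rest
  | nodeB _ p0 p1, b :: rest => if b then subtree p1 rest else subtree p0 rest

/-- `π` is a (partial or full) transcript of the protocol, i.e. a vertex of the protocol tree. -/
def IsTranscript (p : Protocol X Y O) (π : List Bool) : Prop :=
  (subtree p π).isSome = true

/-- `π` is a full transcript of the protocol, i.e. a root-to-leaf path. -/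
def IsFullTranscript (p : Protocol X Y O) (π : List Bool) : Prop :=
  ∃ o : O, subtree p π = some (leaf o)

end Protocol

/-- A protocol solves a communication problem `S` if on every input pair it
outputs a valid output. -/
def Solves {X Y O : Type} (p : Protocol X Y O) (S : X → Y → O → Prop) : Prop :=
  ∀ x y, S x y (p.run x y)

/-- `L(S)`: minimal number of leaves of a protocol solving `S`. -/
def Lsize {X Y O : Type} (S : X → Y → O → Prop) : ℕ :=
  sInf {k | ∃ p : Protocol X Y O, Solves p S ∧ p.leaves = k}

/-- `CC(S)`: the deterministic communication complexity (minimal depth) of `S`. -/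
def CC {X Y O : Type} (S : X → Y → O → Prop) : ℕ :=
  sInf {k | ∃ p : Protocol X Y O, Solves p S ∧ p.depth = k}

/-! ### Decision trees and query complexity -/

inductive DTree (ι O : Type) : Type where
  | leaf : O → DTree ι O
  | node : ι → DTree ι O → DTree ι O → DTree ι O

namespace DTree

variable {ι O : Type}

def run : DTree ι O → (ι → Bool) → O
  | leaf o, _ => o
  | node i t0 t1, z => if z i then run t1 z else run t0 z

def depth : DTree ι O → ℕ
  | leaf _ => 0
  | node _ t0 t1 => max (depth t0) (depth t1) + 1

end DTree

def DSolves {ι O : Type} (T : DTree ι O) (S : (ι → Bool) → O → Prop) : Prop :=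
  ∀ z, S z (T.run z)

/-- `Q(S)`: the deterministic query complexity of the search problem `S`. -/
def Qcomplexity {ι O : Type} (S : (ι → Bool) → O → Prop) : ℕ :=
  sInf {k | ∃ T : DTree ι O, DSolves T S ∧ T.depth = k}

/-! ### Monotone Karchmer–Wigderson relations -/

/-- The monotone KW relation of a rectangle `A × B`: find `i` with `x i > y i`. -/
def mKWrect {ι : Type} (A B : Set (ι → Bool)) : ↥A → ↥B → ι → Prop :=
  fun x y i => x.val i = true ∧ y.val i = false

/-- `mL(A × B)`: the monotone formula complexity of the rectangle `A × B`. -/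
def mL {ι : Type} (A B : Set (ι → Bool)) : ℕ := Lsize (mKWrect A B)

/-- The monotone KW relation of a monotone function `f`. -/
def mKW {ι : Type} (f : (ι → Bool) → Bool) :
    {x : ι → Bool // f x = true} → {y : ι → Bool // f y = false} → ι → Prop :=
  fun x y i => x.val i = true ∧ y.val i = false

/-! ### Lifted search problems, discrepancy, reductions -/

/-- The lifted search problem `S ◇ gd`. -/
def liftSP {ι Λ O : Type} (S : (ι → Bool) → O → Prop) (gd : Λ → Λ → Bool) :
    (ι → Λ) → (ι → Λ) → O → Prop :=
  fun x y o => S (fun i => gd (x i) (y i)) o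

/-- The discrepancy of a gadget `gd : {0,1}^t × {0,1}^t → {0,1}`. -/
def disc {t : ℕ} (gd : (Fin t → Bool) → (Fin t → Bool) → Bool) : ℝ :=
  sSup {r : ℝ | ∃ A B : Finset (Fin t → Bool),
    r = |((((A ×ˢ B).filter fun uv => gd uv.1 uv.2 = false).card : ℝ) -
          (((A ×ˢ B).filter fun uv => gd uv.1 uv.2 = true).card : ℝ))| /
        ((2 ^ t : ℝ) * (2 ^ t : ℝ))}

/-- A (rectangular) reduction between communication problems. -/
def Reduces {X Y O X' Y' O' : Type}
    (S : X → Y → O → Prop) (S' : X' → Y' → O' → Prop) : Prop :=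
  ∃ (RA : X → X') (RB : Y → Y') (Rout : O' → O),
    ∀ x y o', S' (RA x) (RB y) o' → S x y (Rout o')

/-- An injective reduction between communication problems. -/
def ReducesInj {X Y O X' Y' O' : Type}
    (S : X → Y → O → Prop) (S' : X' → Y' → O' → Prop) : Prop :=
  ∃ (RA : X → X') (RB : Y → Y') (Rout : O' → O),
    Function.Injective RA ∧ Function.Injective RB ∧
    ∀ x y o', S' (RA x) (RB y) o' → S x y (Rout o')

/-! ### Compositions -/

/-- `mKW_f ◇ mKW_g := mKW_{f ◇ g}` : Alice gets `X ∈ (f◇g)⁻¹(1)`, Bob gets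
`Y ∈ (f◇g)⁻¹(0)`, and they must find an entry `(i,j)` with `X i j > Y i j`. -/
def diamondKW {m : ℕ} {ι : Type} (f : (Fin m → Bool) → Bool) (g : (ι → Bool) → Bool) :
    {X : Fin m → ι → Bool // f (fun i => g (X i)) = true} →
    {Y : Fin m → ι → Bool // f (fun i => g (Y i)) = false} →
    (Fin m × ι) → Prop :=
  fun X Y e => X.val e.1 e.2 = true ∧ Y.val e.1 e.2 = false

/-- `mKW_f ⊛ mKW_g` : same inputs as `mKW_f ◇ mKW_g`, but valid outputs are entries
`(i,j)` with `a_i > b_i` and `X i j > Y i j`, where `a_i = g(X_i)`, `b_i = g(Y_i)`. -/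
def starKW {m : ℕ} {ι : Type} (f : (Fin m → Bool) → Bool) (g : (ι → Bool) → Bool) :
    {X : Fin m → ι → Bool // f (fun i => g (X i)) = true} →
    {Y : Fin m → ι → Bool // f (fun i => g (Y i)) = false} →
    (Fin m × ι) → Prop :=
  fun X Y e => g (X.val e.1) = true ∧ g (Y.val e.1) = false ∧
    X.val e.1 e.2 = true ∧ Y.val e.1 e.2 = false

/-- `mKW_f ⊛ (S ◇ gd)` : Alice gets `X ∈ Λ^{m×ℓ}` and `a ∈ f⁻¹(1)`, Bob gets
`Y ∈ Λ^{m×ℓ}` and `b ∈ f⁻¹(0)`; valid outputs are pairs `(i,o)` with `a_i > b_i`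
and `o` a valid output of `S ◇ gd` on the rows `(X_i, Y_i)`. -/
def starLift {m ℓ : ℕ} {Λ O : Type} (f : (Fin m → Bool) → Bool)
    (S : (Fin ℓ → Bool) → O → Prop) (gd : Λ → Λ → Bool) :
    ((Fin m → Fin ℓ → Λ) × {a : Fin m → Bool // f a = true}) →
    ((Fin m → Fin ℓ → Λ) × {b : Fin m → Bool // f b = false}) →
    (Fin m × O) → Prop :=
  fun Xa Yb io =>
    Xa.2.val io.1 = true ∧ Yb.2.val io.1 = false ∧
      liftSP S gd (Xa.1 io.1) (Yb.1 io.1) io.2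

/-! ### Live transcripts -/

/-- `𝒜_{π,W}` : the vectors `a ∈ f⁻¹(1)` such that `(W,a)` is consistent with `π`. -/
def Aset {m ℓ : ℕ} {Λ O : Type} (f : (Fin m → Bool) → Bool)
    (Pr : Protocol ((Fin m → Fin ℓ → Λ) × {a : Fin m → Bool // f a = true})
                   ((Fin m → Fin ℓ → Λ) × {b : Fin m → Bool // f b = false}) (Fin m × O))
    (π : List Bool) (W : Fin m → Fin ℓ → Λ) : Set (Fin m → Bool) :=
  {a | ∃ h : f a = true, Protocol.followsA Pr π (W, ⟨a, h⟩)}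

/-- `ℬ_{π,W}` : the vectors `b ∈ f⁻¹(0)` such that `(W,b)` is consistent with `π`. -/
def Bset {m ℓ : ℕ} {Λ O : Type} (f : (Fin m → Bool) → Bool)
    (Pr : Protocol ((Fin m → Fin ℓ → Λ) × {a : Fin m → Bool // f a = true})
                   ((Fin m → Fin ℓ → Λ) × {b : Fin m → Bool // f b = false}) (Fin m × O))
    (π : List Bool) (W : Fin m → Fin ℓ → Λ) : Set (Fin m → Bool) :=
  {b | ∃ h : f b = false, Protocol.followsB Pr π (W, ⟨b, h⟩)}

/-- `γ(π)` : the average over uniform `W ∈ Λ^{m×ℓ}` of `mL(𝒜_{π,W} × ℬ_{π,W})`. -/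
def gammaM {m ℓ : ℕ} {Λ O : Type} [Fintype Λ] [DecidableEq Λ] (f : (Fin m → Bool) → Bool)
    (Pr : Protocol ((Fin m → Fin ℓ → Λ) × {a : Fin m → Bool // f a = true})
                   ((Fin m → Fin ℓ → Λ) × {b : Fin m → Bool // f b = false}) (Fin m × O))
    (π : List Bool) : ℝ :=
  (∑ W : Fin m → Fin ℓ → Λ, (mL (Aset f Pr π W) (Bset f Pr π W) : ℝ)) /
    (Fintype.card (Fin m → Fin ℓ → Λ) : ℝ)

/-- A transcript is live (alive) if it is a vertex of the protocol tree and `γ(π) ≥ 4m²`. -/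
def LiveT {m ℓ : ℕ} {Λ O : Type} [Fintype Λ] [DecidableEq Λ] (f : (Fin m → Bool) → Bool)
    (Pr : Protocol ((Fin m → Fin ℓ → Λ) × {a : Fin m → Bool // f a = true})
                   ((Fin m → Fin ℓ → Λ) × {b : Fin m → Bool // f b = false}) (Fin m × O))
    (π : List Bool) : Prop :=
  Protocol.IsTranscript Pr π ∧ 4 * (m : ℝ) ^ 2 ≤ gammaM f Pr π

/-! ### Average degree -/

/-- Projection of a set of strings to the coordinates in `J`. -/
def projSet {N Λ : Type} (W : Set (N → Λ)) (J : Set N) : Set (↥J → Λ) :=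
  (fun w (j : ↥J) => w j.val) '' W

/-- Relative average degree: `rAvgDeg_I(W) = (|W| / |W|_{N−I}|) / |Λ|^{|I|}`. -/
def rAvgDeg {N Λ : Type} [Fintype Λ] (W : Set (N → Λ)) (I : Set N) : ℝ :=
  ((W.ncard : ℝ) / ((projSet W Iᶜ).ncard : ℝ)) / ((Fintype.card Λ : ℝ) ^ I.ncard)

/-- View a set of `m × ℓ` matrices as a set of strings indexed by `Fin m × Fin ℓ`. -/
def matSet {m ℓ : ℕ} {Λ : Type} (WW : Set (Fin m → Fin ℓ → Λ)) : Set (Fin m × Fin ℓ → Λ) :=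
  (fun W p => W p.1 p.2) '' WW

/-! ### Hard collections -/

/-- A transcript `π` supports the collection `(𝒲, a^W, b^W)` if for every `W ∈ 𝒲`,
`(W, a^W) ∈ 𝒳_π` and `(W, b^W) ∈ 𝒴_π`. -/
def SupportsCollection {m ℓ : ℕ} {Λ O : Type} (f : (Fin m → Bool) → Bool)
    (Pr : Protocol ((Fin m → Fin ℓ → Λ) × {a : Fin m → Bool // f a = true})
                   ((Fin m → Fin ℓ → Λ) × {b : Fin m → Bool // f b = false}) (Fin m × O))
    (π : List Bool) (WW : Set (Fin m → Fin ℓ → Λ))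
    (aW bW : (Fin m → Fin ℓ → Λ) → (Fin m → Bool)) : Prop :=
  ∀ W ∈ WW, aW W ∈ Aset f Pr π W ∧ bW W ∈ Bset f Pr π W

/-- The collection `(𝒲, a^W, b^W)` is hard: there is a set `R` of revealed rows such that
(i) every set `I` of unrevealed rows has relative average degree at least `4^{-|I|}` in the
restriction of `𝒲` to the unrevealed rows, and (ii) `a^W|_R ≤ b^{W'}|_R` for all `W, W' ∈ 𝒲`. -/
def HardCollection {m ℓ : ℕ} {Λ : Type} [Fintype Λ] (f : (Fin m → Bool) → Bool)
    (WW : Set (Fin m → Fin ℓ → Λ))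
    (aW bW : (Fin m → Fin ℓ → Λ) → (Fin m → Bool)) : Prop :=
  ∃ R : Set (Fin m),
    (∀ I : Set (Fin m), I ⊆ Rᶜ →
      ((1 : ℝ) / 4) ^ I.ncard ≤
        rAvgDeg (projSet (matSet WW) {p : Fin m × Fin ℓ | p.1 ∉ R})
          {q : ↥{p : Fin m × Fin ℓ | p.1 ∉ R} | q.val.1 ∈ I}) ∧
    (∀ W ∈ WW, ∀ W' ∈ WW, ∀ i ∈ R, aW W i ≤ bW W' i)

/-! ### CNF formulas, Nullstellensatz degree -/

/-- A clause over `ℓ` variables: a set of literals; `(i, true)` is the positive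
literal `x_i`, `(i, false)` is the negative literal `¬x_i`. -/
abbrev CnfClause (ℓ : ℕ) := Finset (Fin ℓ × Bool)

/-- An assignment satisfies a clause if some literal is satisfied. -/
def clauseSat {ℓ : ℕ} (z : Fin ℓ → Bool) (C : CnfClause ℓ) : Prop :=
  ∃ lit ∈ C, z lit.1 = lit.2

/-- The search problem `S_φ` : given an assignment, find a violated clause of `φ`. -/
def searchCNF {ℓ : ℕ} (φ : Finset (CnfClause ℓ)) :
    (Fin ℓ → Bool) → CnfClause ℓ → Prop :=
  fun z C => C ∈ φ ∧ ¬ clauseSat z C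

/-- The standard polynomial encoding of a clause. -/
def clausePoly {ℓ : ℕ} (C : CnfClause ℓ) : MvPolynomial (Fin ℓ) (ZMod 2) :=
  ∏ lit ∈ C, (if lit.2 then 1 - MvPolynomial.X lit.1 else MvPolynomial.X lit.1)

/-- The Nullstellensatz degree of a CNF contradiction `φ` over `F₂`. -/
def NSdeg {ℓ : ℕ} (φ : Finset (CnfClause ℓ)) : ℕ :=
  sInf {d : ℕ | ∃ (q : CnfClause ℓ → MvPolynomial (Fin ℓ) (ZMod 2))
      (r : Fin ℓ → MvPolynomial (Fin ℓ) (ZMod 2)),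
      ((∑ C ∈ φ, clausePoly C * q C) +
        ∑ i : Fin ℓ, (MvPolynomial.X i ^ 2 - MvPolynomial.X i) * r i) = 1 ∧
      (∀ C ∈ φ, (clausePoly C * q C).totalDegree ≤ d) ∧
      (∀ i : Fin ℓ, ((MvPolynomial.X i ^ 2 - MvPolynomial.X i) * r i).totalDegree ≤ d)}

/-- The equality gadget. -/
def eqGadget {Λ : Type} [DecidableEq Λ] : Λ → Λ → Bool := fun u v => decide (u = v)

/-! ### Semi-monotone composition -/

/-- `U_m ◇ mKW_g` : Alice gets `X`, Bob gets `Y`; with `a_i = g(X_i)`, `b_i = g(Y_i)`,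
valid outputs are entries `(i,j)` with (`a_i > b_i` and `X i j > Y i j`), or
(`a_i < b_i` and `X i j < Y i j`), or (`a_i = b_i` and `X i j ≠ Y i j`); if `a = b`
the players may output the failure symbol `⊥` (here `none`). -/
def semiU {m : ℕ} {ι : Type} (g : (ι → Bool) → Bool) :
    (Fin m → ι → Bool) → (Fin m → ι → Bool) → Option (Fin m × ι) → Prop :=
  fun X Y o =>
    match o with
    | none => ∀ i, g (X i) = g (Y i)
    | some e =>
        (g (X e.1) = true ∧ g (Y e.1) = false ∧ X e.1 e.2 = true ∧ Y e.1 e.2 = false) ∨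
        (g (X e.1) = false ∧ g (Y e.1) = true ∧ X e.1 e.2 = false ∧ Y e.1 e.2 = true) ∨
        (g (X e.1) = g (Y e.1) ∧ X e.1 e.2 ≠ Y e.1 e.2)

/-! ### Razborov rank measure over F₂ -/

/-- The maximal `F₂`-rank of the restriction of `A` to an `S`-monochromatic rectangle. -/
def monoMaxRank {X Y O : Type} [Fintype X] [Fintype Y]
    (S : X → Y → O → Prop) (A : Matrix X Y (ZMod 2)) : ℕ :=
  sSup {r : ℕ | ∃ (U : Finset X) (V : Finset Y) (o : O),
    (∀ x ∈ U, ∀ y ∈ V, S x y o) ∧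
    r = (A.submatrix (Subtype.val : {x // x ∈ U} → X)
          (Subtype.val : {y // y ∈ V} → Y)).rank}

/-- The Razborov rank measure `μ_{F₂}(S, A)`. -/
def muF2 {X Y O : Type} [Fintype X] [Fintype Y]
    (S : X → Y → O → Prop) (A : Matrix X Y (ZMod 2)) : ℝ :=
  (A.rank : ℝ) / (monoMaxRank S A : ℝ)

/-! ### Kronecker powers, pattern matrices -/

/-- The `m`-fold Kronecker power of a square matrix `B`, with index type `Fin m → ι`. -/
def kronPow {ι R : Type} [CommMonoid R] (m : ℕ) (B : Matrix ι ι R) :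
    Matrix (Fin m → ι) (Fin m → ι) R :=
  Matrix.of fun x y => ∏ i, B (x i) (y i)

/-- The pattern matrix `A_{x,y} = p(eq(x₁,y₁),…,eq(x_ℓ,y_ℓ))` of a multilinear
polynomial `p` with coefficients `phat` over `F₂`. -/
def patternMatrix {Λ : Type} [DecidableEq Λ] (ℓ : ℕ)
    (phat : Finset (Fin ℓ) → ZMod 2) : Matrix (Fin ℓ → Λ) (Fin ℓ → Λ) (ZMod 2) :=
  Matrix.of fun x y =>
    ∑ T : Finset (Fin ℓ), phat T * ∏ i ∈ T, (if x i = y i then (1 : ZMod 2) else 0)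

/-! ### s-t-connectivity -/

/-- The `s`-`t`-connectivity function: the input is the adjacency matrix of a directed
graph on `n` vertices, `s = 0`, `t = n-1`; output is whether `t` is reachable from `s`. -/
def stConn (n : ℕ) : ((Fin n × Fin n) → Bool) → Bool :=
  fun E =>
    if ∀ h : 0 < n,
        Relation.ReflTransGen (fun u v : Fin n => E (u, v) = true)
          ⟨0, h⟩ ⟨n - 1, Nat.sub_lt h Nat.one_pos⟩
      then true else false

/-! ### The matrix M of the semi-monotone composition theorem -/

/-- The matrix `M` used in the semi-monotone composition theorem, built from a matrix
`A ∈ F₂^{𝒳×𝒴}` (with `𝒳 = range xs`, `𝒴 = range ys` identified with `Fin K` via the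
left inverses `ix`, `iy`). -/
def semiM {m n K : ℕ} (g : (Fin n → Bool) → Bool) (xs ys : Fin K → (Fin n → Bool))
    (ix iy : (Fin n → Bool) → Fin K) (A : Matrix (Fin K) (Fin K) (ZMod 2)) :
    Matrix (Fin m → Fin n → Bool) (Fin m → Fin n → Bool) (ZMod 2) :=
  Matrix.of fun X Y =>
    if (fun i => g (X i)) = (fun i => g (Y i)) then 0
    else ∏ i : Fin m,
      (if g (X i) = true ∧ g (Y i) = false then A (ix (X i)) (iy (Y i))
       else if g (X i) = false ∧ g (Y i) = true then A (ix (Y i)) (iy (X i))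
       else if X i = Y i then 1 else 0)

end

/-!
For a set `R` of revealed rows, fix the bits of every row in `R`: either Alice's bit is `0`, or
Bob's bit is `1`. Both choices make the row useless as an output, and together they cost one
extra leaf, so some choice keeps half of `mL + 1`. Collect the matrices `W` whose restricted
rectangle satisfies `s ≤ mL + 1`, and follow the potential `s * δ`, where `δ` is the density of
their projection to the unrevealed rows.

Since `∑ 1 / k` grows logarithmically and `mL` is at most exponential in `m`, an average of
`4 * m ^ 2` forces a threshold `s` with `s * δ > 2` while nothing is revealed. If the average degree
of a set `I` of unrevealed rows is below `4 ^ (-|I|)`, then revealing `I` multiplies `δ` by more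
than `4 ^ |I|`; choosing the most popular of the `2 ^ |I|` ways to fix the bits costs a factor
`2 ^ |I|` in `δ` and another in `s`, so the potential stays above `2`. At a maximal `R` with
potential above `2` no such `I` is left, and `δ ≤ 1` gives `mL > 1`, so the restricted rectangles
are nonempty and supply the vectors `a^W` and `b^W`.
-/

namespace Protocol

variable {X Y X' Y' O : Type}

/-- Transport of a protocol along maps of the players' inputs. A player whose input lies outside
the range always sends `false`, so that no retraction of the maps has to exist. -/
noncomputable def extend (f : X → X') (g : Y → Y') : Protocol X Y O → Protocol X' Y' O
  | leaf o => leaf o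
  | nodeA h p q => nodeA (Function.extend f h fun _ => false) (extend f g p) (extend f g q)
  | nodeB h p q => nodeB (Function.extend g h fun _ => false) (extend f g p) (extend f g q)

lemma leaves_extend (f : X → X') (g : Y → Y') (p : Protocol X Y O) :
    (p.extend f g).leaves = p.leaves := by
  induction p with
  | leaf o => rfl
  | nodeA h p q hp hq => simp only [extend, leaves, hp, hq]
  | nodeB h p q hp hq => simp only [extend, leaves, hp, hq]

lemma run_extend {f : X → X'} {g : Y → Y'} (hf : f.Injective) (hg : g.Injective)
    (p : Protocol X Y O) (x : X) (y : Y) : (p.extend f g).run (f x) (g y) = p.run x y := by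
  induction p with
  | leaf o => rfl
  | nodeA h p q hp hq => simp only [extend, run, hf.extend_apply, hp, hq]
  | nodeB h p q hp hq => simp only [extend, run, hg.extend_apply, hp, hq]

end Protocol

section MonotoneComplexity

variable {ι : Type} {A B : Set (ι → Bool)}

/-- The vectors of `A` that take the constant value `c` on `Z`. -/
def fixedOn (Z : Set ι) (c : Bool) (A : Set (ι → Bool)) : Set (ι → Bool) :=
  {a ∈ A | ∀ i ∈ Z, a i = c}

lemma fixedOn_subset (Z : Set ι) (c : Bool) (A : Set (ι → Bool)) : fixedOn Z c A ⊆ A :=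
  Set.sep_subset _ _

lemma fixedOn_empty (c : Bool) (A : Set (ι → Bool)) : fixedOn ∅ c A = A := by
  simp [fixedOn]

lemma fixedOn_insert (i : ι) (Z : Set ι) (c : Bool) (A : Set (ι → Bool)) :
    fixedOn (insert i Z) c A = fixedOn {i} c (fixedOn Z c A) := by
  ext a
  simp only [fixedOn, Set.mem_ofPred_eq, Set.forall_mem_insert, Set.mem_singleton_iff, forall_eq]
  tauto

/-- The monotone Karchmer–Wigderson relation of the rectangle `A × B` has a solution inside `J` on
every input pair. -/
def SolvableOn (J : Finset ι) (A B : Set (ι → Bool)) : Prop :=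
  ∀ a ∈ A, ∀ b ∈ B, ∃ i ∈ J, a i = true ∧ b i = false

lemma SolvableOn.mono {J : Finset ι} {A' B' : Set (ι → Bool)} (h : SolvableOn J A B)
    (hA : A' ⊆ A) (hB : B' ⊆ B) : SolvableOn J A' B' :=
  fun a ha b hb => h a (hA ha) b (hB hb)

lemma solvableOn_univ_of_monotone [Fintype ι] {f : (ι → Bool) → Bool} (hf : Monotone f)
    (hA : ∀ a ∈ A, f a = true) (hB : ∀ b ∈ B, f b = false) : SolvableOn Finset.univ A B := by
  intro a ha b hb
  have hab : ¬ a ≤ b := fun h => absurd (hf h) (by simp [hA a ha, hB b hb])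
  simpa [Pi.le_def, Bool.le_iff_imp] using hab

lemma exists_solves_mKWrect_of_fixedOn (i : ι)
    {p : Protocol (fixedOn {i} false A) B ι} {q : Protocol A (fixedOn {i} true B) ι}
    (hp : Solves p (mKWrect _ _)) (hq : Solves q (mKWrect _ _)) :
    ∃ r : Protocol A B ι, Solves r (mKWrect A B) ∧
      r.leaves + 1 = (p.leaves + 1) + (q.leaves + 1) := by
  have hA := fixedOn_subset {i} false A
  have hB := fixedOn_subset {i} true B
  refine ⟨.nodeA (fun a => a.1 i) (p.extend (Set.inclusion hA) id)
    (.nodeB (fun b => b.1 i) (.leaf i) (q.extend id (Set.inclusion hB))), ?_, ?_⟩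
  · intro a b
    cases ha : a.1 i with
    | false =>
      have hrun := p.run_extend (Set.inclusion_injective hA) Function.injective_id
        ⟨a, a.2, by simpa using ha⟩ b
      simpa [Protocol.run, ha] using hrun ▸ hp ⟨a, a.2, by simpa using ha⟩ b
    | true =>
      cases hb : b.1 i with
      | false => simpa [Protocol.run, ha, hb] using ⟨ha, hb⟩
      | true =>
        have hrun := q.run_extend Function.injective_id (Set.inclusion_injective hB)
          a ⟨b, b.2, by simpa using hb⟩
        simpa [Protocol.run, ha, hb] using hrun ▸ hq a ⟨b, b.2, by simpa using hb⟩
  · simp only [Protocol.leaves, Protocol.leaves_extend]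
    ring

lemma SolvableOn.exists_solves [Nonempty ι] {J : Finset ι} (h : SolvableOn J A B) :
    ∃ p : Protocol A B ι, Solves p (mKWrect A B) ∧ p.leaves + 1 ≤ 2 ^ (J.card + 1) := by
  induction J using Finset.induction_on generalizing A B with
  | empty =>
    refine ⟨.leaf (Classical.arbitrary ι), fun a b => ?_, by simp [Protocol.leaves]⟩
    obtain ⟨i, hi, -⟩ := h a a.2 b b.2
    simp at hi
  | insert i J hi ih =>
    have hA : SolvableOn J (fixedOn {i} false A) B := by
      rintro a ⟨ha, hai⟩ b hb
      obtain ⟨j, hj, haj, hbj⟩ := h a ha b hb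
      refine ⟨j, Finset.mem_of_mem_insert_of_ne hj ?_, haj, hbj⟩
      rintro rfl
      simp [hai] at haj
    have hB : SolvableOn J A (fixedOn {i} true B) := by
      rintro a ha b ⟨hb, hbi⟩
      obtain ⟨j, hj, haj, hbj⟩ := h a ha b hb
      refine ⟨j, Finset.mem_of_mem_insert_of_ne hj ?_, haj, hbj⟩
      rintro rfl
      simp [hbi] at hbj
    obtain ⟨p, hp, hpJ⟩ := ih hA
    obtain ⟨q, hq, hqJ⟩ := ih hB
    obtain ⟨r, hr, hrpq⟩ := exists_solves_mKWrect_of_fixedOn i hp hq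
    refine ⟨r, hr, ?_⟩
    rw [Finset.card_insert_of_notMem hi, hrpq, pow_succ]
    omega

lemma mL_le_leaves {p : Protocol A B ι} (hp : Solves p (mKWrect A B)) : mL A B ≤ p.leaves :=
  Nat.sInf_le ⟨p, hp, rfl⟩

lemma SolvableOn.exists_leaves_eq_mL [Nonempty ι] {J : Finset ι} (h : SolvableOn J A B) :
    ∃ p : Protocol A B ι, Solves p (mKWrect A B) ∧ p.leaves = mL A B :=
  let ⟨p, hp, _⟩ := h.exists_solves
  Nat.sInf_mem (s := {k | ∃ p, Solves p (mKWrect A B) ∧ p.leaves = k}) ⟨_, p, hp, rfl⟩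

lemma SolvableOn.mL_add_one_le_two_pow [Nonempty ι] {J : Finset ι} (h : SolvableOn J A B) :
    mL A B + 1 ≤ 2 ^ (J.card + 1) :=
  let ⟨_, hp, hpJ⟩ := h.exists_solves
  (Nat.succ_le_succ (mL_le_leaves hp)).trans hpJ

lemma SolvableOn.mL_add_one_le_add {J : Finset ι} (h : SolvableOn J A B) (i : ι) :
    mL A B + 1 ≤ (mL (fixedOn {i} false A) B + 1) + (mL A (fixedOn {i} true B) + 1) := by
  have : Nonempty ι := ⟨i⟩
  obtain ⟨p, hp, hpL⟩ := (h.mono (fixedOn_subset {i} false A) subset_rfl).exists_leaves_eq_mL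
  obtain ⟨q, hq, hqL⟩ := (h.mono subset_rfl (fixedOn_subset {i} true B)).exists_leaves_eq_mL
  obtain ⟨r, hr, hrpq⟩ := exists_solves_mKWrect_of_fixedOn i hp hq
  rw [← hpL, ← hqL, ← hrpq]
  exact Nat.succ_le_succ (mL_le_leaves hr)

lemma nonempty_of_one_lt_mL [Nonempty ι] (h : 1 < mL A B) : A.Nonempty ∧ B.Nonempty := by
  by_contra hAB
  have hleaf : Solves (.leaf (Classical.arbitrary ι)) (mKWrect A B) := fun a b =>
    absurd ⟨⟨a, a.2⟩, ⟨b, b.2⟩⟩ hAB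
  exact h.not_ge (mL_le_leaves hleaf)

end MonotoneComplexity

section Density

variable {α β N Λ : Type}

/-- The density of a set in a finite type. On an infinite type `Nat.card` makes it `0`. -/
noncomputable def density (W : Set α) : ℝ :=
  W.ncard / Nat.card α

lemma density_nonneg (W : Set α) : 0 ≤ density W := by
  unfold density
  positivity

lemma density_le_one [Finite α] (W : Set α) : density W ≤ 1 := by
  rw [density, ← Set.ncard_univ]
  exact div_le_one_of_le₀ (by exact_mod_cast Set.ncard_le_ncard W.subset_univ) (by positivity)

lemma density_mono [Finite α] {V W : Set α} (h : V ⊆ W) : density V ≤ density W := by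
  unfold density
  gcongr
  exact W.toFinite

lemma density_union_le (V W : Set α) : density (V ∪ W) ≤ density V + density W := by
  unfold density
  rw [← add_div]
  gcongr
  exact_mod_cast Set.ncard_union_le V W

lemma density_image_of_bijective {φ : α → β} (hφ : φ.Bijective) (W : Set α) :
    density (φ '' W) = density W := by
  rw [density, density, Set.ncard_image_of_injective W hφ.injective, Nat.card_eq_of_bijective φ hφ]

lemma density_projSet_projSet (W : Set (N → Λ)) (J : Set N) (I : Set J) :
    density (projSet (projSet W J) I) = density (projSet W (Subtype.val '' I)) := by
  let e : I ≃ Subtype.val '' I := Equiv.Set.image _ I Subtype.val_injective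
  have himage : projSet (projSet W J) I = (· ∘ e) '' projSet W (Subtype.val '' I) := by
    simp only [projSet, Set.image_image]
    rfl
  rw [himage]
  exact density_image_of_bijective (e.arrowCongr (Equiv.refl Λ)).symm.bijective _

lemma density_eq_rAvgDeg_mul_density [Finite N] [Fintype Λ] (W : Set (N → Λ)) (I : Set N) :
    density W = rAvgDeg W I * density (projSet W Iᶜ) := by
  rcases W.eq_empty_or_nonempty with rfl | hW
  · simp [density, rAvgDeg]
  have hcard : Nat.card (N → Λ) = Fintype.card Λ ^ I.ncard * Nat.card (↥Iᶜ → Λ) := by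
    rw [Nat.card_fun, Nat.card_fun, Nat.card_eq_fintype_card, Nat.card_coe_set_eq, ← pow_add,
      Set.ncard_add_ncard_compl]
  have hne : Nat.card (N → Λ) ≠ 0 := Nat.card_ne_zero.2 ⟨⟨hW.some⟩, inferInstance⟩
  obtain ⟨hI, hIc⟩ := mul_ne_zero_iff.1 (hcard ▸ hne)
  have hproj : (projSet W Iᶜ).ncard ≠ 0 :=
    ((Set.ncard_pos (Set.toFinite _)).2 (hW.image _)).ne'
  rify at hcard hI hIc hproj
  rw [density, density, rAvgDeg, hcard]
  field_simp

lemma one_le_rAvgDeg_empty [Finite N] [Fintype Λ] {W : Set (N → Λ)} (hW : W.Nonempty) :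
    1 ≤ rAvgDeg W ∅ := by
  have hpos : 0 < (projSet W ∅ᶜ).ncard := (Set.ncard_pos (Set.toFinite _)).2 (hW.image _)
  rw [rAvgDeg, Set.ncard_empty, pow_zero, div_one, one_le_div (by exact_mod_cast hpos)]
  exact_mod_cast Set.ncard_image_le W.toFinite

end Density

section LayerCake

variable {Ω : Type} [Fintype Ω] {v : Ω → ℕ}

lemma average_eq_sum_density {N : ℕ} (hv : ∀ w, v w ≤ N) :
    (∑ w, (v w : ℝ)) / Fintype.card Ω = ∑ k ∈ Finset.Icc 1 N, density {w | k ≤ v w} := by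
  have hlayers : ∀ w, (v w : ℝ) = ∑ k ∈ Finset.Icc 1 N, if k ≤ v w then 1 else 0 := by
    intro w
    have : {k ∈ Finset.Icc 1 N | k ≤ v w} = Finset.Icc 1 (v w) := by
      ext k
      have := hv w
      simp only [Finset.mem_filter, Finset.mem_Icc]
      omega
    rw [Finset.sum_boole, this, Nat.card_Icc, Nat.add_sub_cancel]
  simp_rw [hlayers]
  rw [Finset.sum_comm, Finset.sum_div]
  refine Finset.sum_congr rfl fun k _ => ?_
  rw [Finset.sum_boole, density, Nat.card_eq_fintype_card, ← Set.ncard_coe_finset,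
    Finset.coe_filter_univ]

lemma average_le_mul_one_add_log {N : ℕ} (hv : ∀ w, v w ≤ N) {c : ℝ}
    (hc : ∀ k : ℕ, k * density {w | k ≤ v w} ≤ c) :
    (∑ w, (v w : ℝ)) / Fintype.card Ω ≤ c * (1 + Real.log N) := by
  have hc0 : 0 ≤ c := by simpa using hc 0
  calc (∑ w, (v w : ℝ)) / Fintype.card Ω
      = ∑ k ∈ Finset.Icc 1 N, density {w | k ≤ v w} := average_eq_sum_density hv
    _ ≤ ∑ k ∈ Finset.Icc 1 N, c * (k : ℝ)⁻¹ := by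
        refine Finset.sum_le_sum fun k hk => ?_
        have hk0 : (0 : ℝ) < k := by exact_mod_cast (Finset.mem_Icc.1 hk).1
        rw [← div_eq_mul_inv, le_div_iff₀' hk0]
        exact hc k
    _ = c * (harmonic N : ℝ) := by
        rw [← Finset.mul_sum, harmonic_eq_sum_Icc]
        push_cast
        rfl
    _ ≤ c * (1 + Real.log N) := by
        gcongr
        exact harmonic_le_one_add_log N

lemma exists_two_lt_mul_density {m : ℕ} (hm : 0 < m) (hv : ∀ w, v w + 1 ≤ 2 ^ (m + 1))
    (havg : 4 * (m : ℝ) ^ 2 ≤ (∑ w, (v w : ℝ)) / Fintype.card Ω) :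
    ∃ s : ℕ, 2 < s * density {w | s ≤ v w + 1} := by
  have hm1 : (1 : ℝ) ≤ m := by exact_mod_cast hm
  rcases isEmpty_or_nonempty Ω with hΩ | hΩ
  · simp at havg
    nlinarith
  by_contra! hc
  have hle := average_le_mul_one_add_log hv hc
  have hadd : (∑ w, ((v w + 1 : ℕ) : ℝ)) / Fintype.card Ω =
      (∑ w, (v w : ℝ)) / Fintype.card Ω + 1 := by
    simp [Finset.sum_add_distrib, add_div]
  have hlog : Real.log (2 ^ (m + 1) : ℕ) = (m + 1) * Real.log 2 := by
    push_cast
    rw [Real.log_pow]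
    push_cast
    rfl
  rw [hadd, hlog] at hle
  nlinarith [Real.log_two_lt_d9]

end LayerCake

section Reveal

variable {ι Ω α : Type} {A B : Ω → Set (ι → Bool)}

/-- The indices `W` for which the rectangle `A W × B W` still has complexity `mL + 1` at least `s`
after the rows of `Z` are fixed to `0` for Alice and the rows of `U` are fixed to `1` for Bob. -/
def complexIndices (A B : Ω → Set (ι → Bool)) (Z U : Set ι) (s : ℝ) : Set Ω :=
  {W | s ≤ mL (fixedOn Z false (A W)) (fixedOn U true (B W)) + 1}

lemma complexIndices_subset_union {J : Finset ι} (hAB : ∀ W, SolvableOn J (A W) (B W))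
    (Z U : Set ι) (s : ℝ) (i : ι) :
    complexIndices A B Z U s ⊆
      complexIndices A B (insert i Z) U (s / 2) ∪ complexIndices A B Z (insert i U) (s / 2) := by
  intro W hW
  have hsplit : (mL (fixedOn Z false (A W)) (fixedOn U true (B W)) + 1 : ℝ) ≤
      (mL (fixedOn (insert i Z) false (A W)) (fixedOn U true (B W)) + 1) +
        (mL (fixedOn Z false (A W)) (fixedOn (insert i U) true (B W)) + 1) := by
    rw [fixedOn_insert, fixedOn_insert]
    exact_mod_cast ((hAB W).mono (fixedOn_subset _ _ _) (fixedOn_subset _ _ _)).mL_add_one_le_add i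
  by_contra hnot
  simp only [complexIndices, Set.mem_union, Set.mem_ofPred_eq, not_or, not_le] at hW hnot
  linarith [hnot.1, hnot.2]

lemma exists_insert_density_image_le [Finite α] {J : Finset ι}
    (hAB : ∀ W, SolvableOn J (A W) (B W)) (φ : Ω → α) (Z U : Set ι) (s : ℝ) (i : ι) :
    ∃ Z' U', Z' ∪ U' = insert i (Z ∪ U) ∧
      density (φ '' complexIndices A B Z U s) ≤
        2 * density (φ '' complexIndices A B Z' U' (s / 2)) := by
  have hle : density (φ '' complexIndices A B Z U s) ≤
      density (φ '' complexIndices A B (insert i Z) U (s / 2)) +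
        density (φ '' complexIndices A B Z (insert i U) (s / 2)) := by
    refine (density_mono (Set.image_mono (complexIndices_subset_union hAB Z U s i))).trans ?_
    rw [Set.image_union]
    exact density_union_le _ _
  rcases le_total (density (φ '' complexIndices A B (insert i Z) U (s / 2)))
    (density (φ '' complexIndices A B Z (insert i U) (s / 2))) with h | h
  · exact ⟨Z, insert i U, Set.union_insert, by linarith⟩
  · exact ⟨insert i Z, U, Set.insert_union, by linarith⟩

lemma exists_union_density_image_le [Finite α] {J : Finset ι}
    (hAB : ∀ W, SolvableOn J (A W) (B W)) (φ : Ω → α) (Z U : Set ι) (s : ℝ) (I : Finset ι) :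
    ∃ Z' U', Z' ∪ U' = Z ∪ U ∪ I ∧
      density (φ '' complexIndices A B Z U s) ≤
        2 ^ I.card * density (φ '' complexIndices A B Z' U' (s / 2 ^ I.card)) := by
  induction I using Finset.induction_on with
  | empty => exact ⟨Z, U, by simp, by simp⟩
  | insert i I hi ih =>
    obtain ⟨Z₁, U₁, hZU₁, h₁⟩ := ih
    obtain ⟨Z₂, U₂, hZU₂, h₂⟩ := exists_insert_density_image_le hAB φ Z₁ U₁ (s / 2 ^ I.card) i
    refine ⟨Z₂, U₂, by rw [hZU₂, hZU₁, Finset.coe_insert, Set.union_insert], ?_⟩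
    rw [div_div, ← pow_succ] at h₂
    rw [Finset.card_insert_of_notMem hi]
    calc density (φ '' complexIndices A B Z U s)
        ≤ 2 ^ I.card * density (φ '' complexIndices A B Z₁ U₁ (s / 2 ^ I.card)) := h₁
      _ ≤ 2 ^ I.card * (2 * density (φ '' complexIndices A B Z₂ U₂ (s / 2 ^ (I.card + 1)))) := by
          gcongr
      _ = _ := by rw [pow_succ, mul_assoc]

end Reveal

section Matrices

variable {m ℓ : ℕ} {Λ : Type} {A B : (Fin m → Fin ℓ → Λ) → Set (Fin m → Bool)}

/-- The restriction `𝒲|_{([m]-R)×[ℓ]}` of a set of matrices to the rows outside `R`, in the form in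
which it occurs in `HardCollection`. -/
abbrev projRows (R : Set (Fin m)) (WW : Set (Fin m → Fin ℓ → Λ)) :
    Set (↥{p : Fin m × Fin ℓ | p.1 ∉ R} → Λ) :=
  projSet (matSet WW) {p | p.1 ∉ R}

lemma projRows_eq_image (R : Set (Fin m)) (WW : Set (Fin m → Fin ℓ → Λ)) :
    projRows R WW = (fun W p => W p.1.1 p.1.2) '' WW :=
  Set.image_image _ _ _

lemma density_projRows_empty (WW : Set (Fin m → Fin ℓ → Λ)) :
    density (projRows ∅ WW) = density WW := by
  rw [projRows_eq_image]
  refine density_image_of_bijective ⟨fun W W' h => ?_, fun g => ?_⟩ WW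
  · funext i j
    exact congrFun h ⟨(i, j), Set.notMem_empty i⟩
  · exact ⟨fun i j => g ⟨(i, j), Set.notMem_empty i⟩, rfl⟩

lemma density_projRows_eq_rAvgDeg_mul [Fintype Λ] (R I : Set (Fin m))
    (WW : Set (Fin m → Fin ℓ → Λ)) :
    density (projRows R WW) =
      rAvgDeg (projRows R WW) {q | q.1.1 ∈ I} * density (projRows (R ∪ I) WW) := by
  have hrows : Subtype.val '' {q : ↥{p : Fin m × Fin ℓ | p.1 ∉ R} | q.1.1 ∈ I}ᶜ =
      {p | p.1 ∉ R ∪ I} := by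
    ext p
    simp only [Set.mem_image, Set.mem_compl_iff, Set.mem_ofPred_eq, Set.mem_union, Subtype.exists,
      exists_and_right, exists_eq_right, not_or]
    tauto
  rw [density_eq_rAvgDeg_mul_density _ {q | q.1.1 ∈ I}, density_projSet_projSet, hrows]

/-- The rows of `R` can be revealed with potential (complexity threshold times density of the
unrevealed part) above `2`. -/
def Revealable (A B : (Fin m → Fin ℓ → Λ) → Set (Fin m → Bool)) (R : Set (Fin m)) : Prop :=
  ∃ Z U s, Z ∪ U = R ∧ 2 < s * density (projRows R (complexIndices A B Z U s))

lemma revealable_empty [Fintype Λ] (hm : 0 < m)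
    (hAB : ∀ W, SolvableOn Finset.univ (A W) (B W))
    (havg : 4 * (m : ℝ) ^ 2 ≤
      (∑ W, (mL (A W) (B W) : ℝ)) / Fintype.card (Fin m → Fin ℓ → Λ)) :
    Revealable A B ∅ := by
  have : Nonempty (Fin m) := ⟨⟨0, hm⟩⟩
  obtain ⟨s, hs⟩ := exists_two_lt_mul_density hm
    (fun W => by simpa using (hAB W).mL_add_one_le_two_pow) havg
  refine ⟨∅, ∅, s, Set.union_empty ∅, ?_⟩
  simp only [density_projRows_empty, complexIndices, fixedOn_empty]
  exact_mod_cast hs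

lemma revealable_union_of_rAvgDeg_lt [Fintype Λ] {J : Finset (Fin m)}
    (hAB : ∀ W, SolvableOn J (A W) (B W)) {Z U I : Set (Fin m)} {s : ℝ}
    (hs : 2 < s * density (projRows (Z ∪ U) (complexIndices A B Z U s)))
    (hI : rAvgDeg (projRows (Z ∪ U) (complexIndices A B Z U s)) {q | q.1.1 ∈ I} <
      (1 / 4) ^ I.ncard) :
    Revealable A B (Z ∪ U ∪ I) := by
  set WW := complexIndices A B Z U s
  obtain ⟨Z', U', hZU', hle⟩ := exists_union_density_image_le hAB
    (fun W (p : ↥{p : Fin m × Fin ℓ | p.1 ∉ Z ∪ U ∪ I}) => W p.1.1 p.1.2) Z U s I.toFinset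
  rw [Set.coe_toFinset] at hZU'
  rw [← projRows_eq_image, ← projRows_eq_image, ← Set.ncard_eq_toFinset_card'] at hle
  refine ⟨Z', U', s / 2 ^ I.ncard, hZU', ?_⟩
  set WW' := complexIndices A B Z' U' (s / 2 ^ I.ncard)
  have hs0 : 0 < s := pos_of_mul_pos_left (two_pos.trans hs) (density_nonneg _)
  have hpow : (4 : ℝ) ^ I.ncard = 2 ^ I.ncard * 2 ^ I.ncard := by
    rw [← mul_pow]
    norm_num
  calc 2 < s * density (projRows (Z ∪ U) WW) := hs
    _ = s * (rAvgDeg (projRows (Z ∪ U) WW) {q | q.1.1 ∈ I} *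
          density (projRows (Z ∪ U ∪ I) WW)) := by rw [density_projRows_eq_rAvgDeg_mul _ I]
    _ ≤ s * ((1 / 4) ^ I.ncard * (2 ^ I.ncard * density (projRows (Z ∪ U ∪ I) WW'))) := by
        gcongr
        exact density_nonneg _
    _ = s / 2 ^ I.ncard * density (projRows (Z ∪ U ∪ I) WW') := by
        rw [one_div, inv_pow, hpow]
        field_simp

lemma one_fourth_pow_le_rAvgDeg_of_maximal [Fintype Λ] {J : Finset (Fin m)}
    (hAB : ∀ W, SolvableOn J (A W) (B W)) {Z U : Set (Fin m)} {s : ℝ}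
    (hmax : Maximal (Revealable A B) (Z ∪ U))
    (hs : 2 < s * density (projRows (Z ∪ U) (complexIndices A B Z U s)))
    {I : Set (Fin m)} (hI : I ⊆ (Z ∪ U)ᶜ) :
    (1 / 4) ^ I.ncard ≤
      rAvgDeg (projRows (Z ∪ U) (complexIndices A B Z U s)) {q | q.1.1 ∈ I} := by
  by_contra! hlt
  have hsub : I ⊆ Z ∪ U := Set.subset_union_right.trans <|
    hmax.le_of_ge (revealable_union_of_rAvgDeg_lt hAB hs hlt) Set.subset_union_left
  obtain rfl : I = ∅ := Set.subset_empty_iff.1 fun i hi => hI hi (hsub hi)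
  have hne : (projRows (Z ∪ U) (complexIndices A B Z U s)).Nonempty := by
    rw [Set.nonempty_iff_ne_empty]
    intro h
    norm_num [h, density] at hs
  simp only [Set.mem_empty_iff_false, Set.ofPred_false, Set.ncard_empty, pow_zero] at hlt
  exact hlt.not_ge (one_le_rAvgDeg_empty hne)

lemma exists_fixedOn_of_two_lt_mul_density [Finite Λ] [Nonempty (Fin m)] {R Z U : Set (Fin m)}
    {s : ℝ} (hs : 2 < s * density (projRows R (complexIndices A B Z U s))) :
    ∃ aW bW : (Fin m → Fin ℓ → Λ) → Fin m → Bool, ∀ W ∈ complexIndices A B Z U s,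
      aW W ∈ fixedOn Z false (A W) ∧ bW W ∈ fixedOn U true (B W) := by
  have hs2 : 2 < s := by
    have hs0 : 0 < s := pos_of_mul_pos_left (two_pos.trans hs) (density_nonneg _)
    exact hs.trans_le (mul_le_of_le_one_right hs0.le (density_le_one _))
  have hne : ∀ W ∈ complexIndices A B Z U s,
      (fixedOn Z false (A W)).Nonempty ∧ (fixedOn U true (B W)).Nonempty := by
    intro W hW
    refine nonempty_of_one_lt_mL ?_
    have hmL : (2 : ℝ) < mL (fixedOn Z false (A W)) (fixedOn U true (B W)) + 1 := hs2.trans_le hW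
    exact Nat.succ_lt_succ_iff.1 (by exact_mod_cast hmL)
  choose! aW haW using fun W hW => (hne W hW).1
  choose! bW hbW using fun W hW => (hne W hW).2
  exact ⟨aW, bW, fun W hW => ⟨haW W hW, hbW W hW⟩⟩

end Matrices

theorem hard_collection_lemma_general {m ℓ : ℕ} {Λ : Type} [Fintype Λ] (hm : 0 < m)
    {f : (Fin m → Bool) → Bool} (hf : Monotone f)
    {A B : (Fin m → Fin ℓ → Λ) → Set (Fin m → Bool)}
    (hA : ∀ W, ∀ a ∈ A W, f a = true) (hB : ∀ W, ∀ b ∈ B W, f b = false)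
    (havg : 4 * (m : ℝ) ^ 2 ≤
      (∑ W, (mL (A W) (B W) : ℝ)) / Fintype.card (Fin m → Fin ℓ → Λ)) :
    ∃ (WW : Set (Fin m → Fin ℓ → Λ)) (aW bW : (Fin m → Fin ℓ → Λ) → (Fin m → Bool)),
      (∀ W ∈ WW, aW W ∈ A W ∧ bW W ∈ B W) ∧ HardCollection f WW aW bW := by
  have hAB : ∀ W, SolvableOn Finset.univ (A W) (B W) := fun W =>
    solvableOn_univ_of_monotone hf (hA W) (hB W)
  have : Nonempty (Fin m) := ⟨⟨0, hm⟩⟩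
  obtain ⟨R, hmax⟩ := (Set.toFinite {R | Revealable A B R}).exists_maximal
    ⟨∅, revealable_empty hm hAB havg⟩
  obtain ⟨Z, U, s, rfl, hs⟩ := hmax.prop
  obtain ⟨aW, bW, hab⟩ := exists_fixedOn_of_two_lt_mul_density hs
  refine ⟨complexIndices A B Z U s, aW, bW, fun W hW => ⟨(hab W hW).1.1, (hab W hW).2.1⟩, Z ∪ U,
    fun I hI => one_fourth_pow_le_rAvgDeg_of_maximal hAB hmax hs hI, ?_⟩
  rintro W hW W' hW' i (hi | hi)
  · exact ((hab W hW).1.2 i hi).trans_le (Bool.false_le _)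
  · exact (Bool.le_true _).trans_eq ((hab W' hW').2.2 i hi).symm

/-- Hard collection lemma.  Every live transcript of a protocol
solving `mKW_f ⊛ (S ◇ gd)` supports a hard collection. -/
theorem hard_collection_lemma (m ℓ t : ℕ) (O : Type)
    (f : (Fin m → Bool) → Bool) (S : (Fin ℓ → Bool) → O → Prop)
    (gd : (Fin t → Bool) → (Fin t → Bool) → Bool)
    (hf : Monotone f) (hf1 : ∃ x, f x = true) (hf0 : ∃ x, f x = false)
    (Pr : Protocol
        ((Fin m → Fin ℓ → (Fin t → Bool)) × {a : Fin m → Bool // f a = true})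
        ((Fin m → Fin ℓ → (Fin t → Bool)) × {b : Fin m → Bool // f b = false})
        (Fin m × O))
    (hPr : Solves Pr (starLift f S gd))
    (π : List Bool) (hlive : LiveT f Pr π) :
    ∃ (WW : Set (Fin m → Fin ℓ → (Fin t → Bool)))
      (aW bW : (Fin m → Fin ℓ → (Fin t → Bool)) → (Fin m → Bool)),
      SupportsCollection f Pr π WW aW bW ∧ HardCollection f WW aW bW := by
  have hm : 0 < m := by
    obtain ⟨x, hx⟩ := hf1
    obtain ⟨y, hy⟩ := hf0
    refine Nat.pos_of_ne_zero ?_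
    rintro rfl
    simp [Subsingleton.elim x y, hy] at hx
  exact hard_collection_lemma_general hm hf (fun _ _ ha => ha.1) (fun _ _ hb => hb.1) hlive.2
end

section
/- Let f : {0,1}^m → {0,1} be a non-constant monotone function, S ⊆ {0,1}^ℓ × 𝒪 a search problem, gd a gadget with Λ = {0,1}^t, Π a protocol solving mKW_f ⊛ (S◇gd), and π₁ a live transcript of Π. Then there exist p ∈ ℕ and a set of matrices 𝒲₀ ⊆ Λ^{m×ℓ} with |𝒲₀| ≥ 2^{−p}·|Λ|^{m·ℓ}, such that for every W ∈ 𝒲₀ it holds that mL(𝒜_{π₁,W} × ℬ_{π₁,W}) > 2^p · m. -/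
open Classical

/-!
Two inputs of the mKW relation can be separated by comparing them one coordinate at a time, so the
values `v W = mL (𝒜_{π,W} × ℬ_{π,W})` are below `2 ^ m ≤ 2 ^ m * m`. Up to an additive `m`, such a
value is bounded by the sum of the thresholds `2 ^ p * m`, `p < m`, that it exceeds. If for every
`p` fewer than a `2 ^ (-p)` fraction of the matrices exceeded `2 ^ p * m`, each threshold would
contribute at most `m` to the average of `v`, hence `γ(π) ≤ m * (m + 1) < 4 * m ^ 2`.
-/

section Dyadic

open Finset

theorem min_two_pow_mul_le_add_sum (v c k : ℕ) :
    min v (2 ^ k * c) ≤ c + ∑ p ∈ range k, if 2 ^ p * c < v then 2 ^ p * c else 0 := by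
  induction k with
  | zero => simp
  | succ k ih =>
    have hdouble : 2 ^ (k + 1) * c = 2 * (2 ^ k * c) := by ring
    rw [sum_range_succ, hdouble]
    split_ifs <;> omega

theorem exists_card_le_two_pow_mul_card_filter {Ω : Type*} {s : Finset Ω} {v : Ω → ℕ} {c k : ℕ}
    (hv : ∀ ω ∈ s, v ω ≤ 2 ^ k * c) (hsum : (k + 1) * c * #s < ∑ ω ∈ s, v ω) :
    ∃ p, #s ≤ 2 ^ p * #{ω ∈ s | 2 ^ p * c < v ω} := by
  by_contra! hsmall
  refine hsum.not_ge ?_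
  calc ∑ ω ∈ s, v ω
      ≤ ∑ ω ∈ s, (c + ∑ p ∈ range k, if 2 ^ p * c < v ω then 2 ^ p * c else 0) :=
        sum_le_sum fun ω hω ↦
          (min_eq_left (hv ω hω)).ge.trans (min_two_pow_mul_le_add_sum (v ω) c k)
    _ = c * #s + ∑ p ∈ range k, c * (2 ^ p * #{ω ∈ s | 2 ^ p * c < v ω}) := by
        rw [sum_add_distrib, sum_comm, sum_const, smul_eq_mul, mul_comm]
        congr 1
        refine sum_congr rfl fun p _ ↦ ?_
        rw [← sum_filter, sum_const, smul_eq_mul]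
        ring
    _ ≤ c * #s + ∑ _p ∈ range k, c * #s := by
        gcongr with p
        exact (hsmall p).le
    _ = (k + 1) * c * #s := by
        rw [sum_const, card_range, smul_eq_mul]
        ring

end Dyadic

section MonotoneComplexity

variable {ι : Type}

theorem Lsize_le_leaves {X Y O : Type} {S : X → Y → O → Prop} {p : Protocol X Y O}
    (hp : Solves p S) : Lsize S ≤ p.leaves :=
  Nat.sInf_le ⟨p, hp, rfl⟩

theorem exists_protocol_mKWrect_on (A B : Set (ι → Bool)) {s : Finset ι} (hs : s.Nonempty) :
    ∃ p : Protocol A B ι, p.leaves < 2 ^ s.card ∧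
      ∀ x y, (∃ i ∈ s, x.val i = true ∧ y.val i = false) → mKWrect A B x y (p.run x y) := by
  induction hs using Finset.Nonempty.cons_induction with
  | singleton i => exact ⟨.leaf i, by simp [Protocol.leaves], by simp [mKWrect, Protocol.run]⟩
  | cons i s _ _ ih =>
    obtain ⟨p, hleaves, hp⟩ := ih
    refine ⟨.nodeA (fun x ↦ x.val i) p (.nodeB (fun y ↦ y.val i) (.leaf i) p), ?_, ?_⟩
    · simp only [Protocol.leaves, Finset.card_cons, pow_succ]
      omega
    · intro x y hxy
      simp only [Finset.mem_cons, or_and_right, exists_or, exists_eq_left] at hxy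
      by_cases hsep : x.val i = true ∧ y.val i = false
      · simp only [Protocol.run, hsep, if_true, Bool.false_eq_true, if_false]
        exact hsep
      · have hrest := hp x y (hxy.resolve_left hsep)
        cases hx : x.val i <;> cases hy : y.val i <;> simp_all [Protocol.run]

theorem mL_lt_two_pow_card [Fintype ι] [Nonempty ι] {A B : Set (ι → Bool)}
    (hAB : ∀ x ∈ A, ∀ y ∈ B, ∃ i, x i = true ∧ y i = false) :
    mL A B < 2 ^ Fintype.card ι := by
  obtain ⟨p, hleaves, hp⟩ := exists_protocol_mKWrect_on A B (Finset.univ_nonempty (α := ι))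
  have hsolves : Solves p (mKWrect A B) := fun x y ↦
    hp x y (by simpa using hAB x x.2 y y.2)
  exact (Lsize_le_leaves hsolves).trans_lt hleaves

theorem exists_true_false_of_monotone {f : (ι → Bool) → Bool} (hf : Monotone f) {x y : ι → Bool}
    (hx : f x = true) (hy : f y = false) : ∃ i, x i = true ∧ y i = false := by
  have hlt : ¬x ≤ y := fun hxy ↦ by simpa [hx, hy, Bool.le_iff_imp] using hf hxy
  simpa [Pi.le_def, Bool.le_iff_imp] using hlt

theorem pos_of_apply_ne {m : ℕ} {α β : Type*} {g : (Fin m → α) → β} {x y : Fin m → α}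
    (h : g x ≠ g y) : 0 < m := by
  rcases m.eq_zero_or_pos with rfl | hm
  · exact absurd (congrArg g (Subsingleton.elim x y)) h
  · exact hm

end MonotoneComplexity

section Transcripts

variable {m ℓ : ℕ} {Λ O : Type} {f : (Fin m → Bool) → Bool}
  {Pr : Protocol ((Fin m → Fin ℓ → Λ) × {a : Fin m → Bool // f a = true})
    ((Fin m → Fin ℓ → Λ) × {b : Fin m → Bool // f b = false}) (Fin m × O)} {π : List Bool}

theorem mL_Aset_Bset_lt_two_pow (hm : 0 < m) (hf : Monotone f) (W : Fin m → Fin ℓ → Λ) :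
    mL (Aset f Pr π W) (Bset f Pr π W) < 2 ^ m := by
  have := Fin.pos_iff_nonempty.1 hm
  simpa only [Fintype.card_fin] using mL_lt_two_pow_card
    fun x (hx : x ∈ Aset f Pr π W) y (hy : y ∈ Bset f Pr π W) ↦
      exists_true_false_of_monotone hf hx.1 hy.1

theorem mul_card_lt_sum_mL_of_lt_gammaM [Fintype Λ] [DecidableEq Λ] [Nonempty Λ] {c : ℕ}
    (hc : (c : ℝ) < gammaM f Pr π) :
    c * Fintype.card (Fin m → Fin ℓ → Λ) < ∑ W, mL (Aset f Pr π W) (Bset f Pr π W) := by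
  rw [gammaM, lt_div_iff₀ (Nat.cast_pos.2 Fintype.card_pos)] at hc
  exact_mod_cast hc

end Transcripts

theorem initial_set_of_matrices_general {m ℓ : ℕ} {Λ O : Type} [Fintype Λ] [DecidableEq Λ]
    [Nonempty Λ] {f : (Fin m → Bool) → Bool} (hm : 0 < m) (hf : Monotone f)
    (Pr : Protocol ((Fin m → Fin ℓ → Λ) × {a : Fin m → Bool // f a = true})
      ((Fin m → Fin ℓ → Λ) × {b : Fin m → Bool // f b = false}) (Fin m × O))
    (π : List Bool) (hγ : 4 * (m : ℝ) ^ 2 ≤ gammaM f Pr π) :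
    ∃ (p : ℕ) (W0 : Set (Fin m → Fin ℓ → Λ)),
      (2 : ℝ) ^ (-(p : ℝ)) * (Fintype.card (Fin m → Fin ℓ → Λ) : ℝ) ≤ (W0.ncard : ℝ) ∧
      ∀ W ∈ W0, 2 ^ p * m < mL (Aset f Pr π W) (Bset f Pr π W) := by
  have hbound (W : Fin m → Fin ℓ → Λ) : mL (Aset f Pr π W) (Bset f Pr π W) ≤ 2 ^ m * m :=
    (mL_Aset_Bset_lt_two_pow hm hf W).le.trans (Nat.le_mul_of_pos_right _ hm)
  have hthreshold : (((m + 1) * m : ℕ) : ℝ) < 4 * (m : ℝ) ^ 2 := by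
    exact_mod_cast (by nlinarith : (m + 1) * m < 4 * m ^ 2)
  have hsum : (m + 1) * m * Fintype.card (Fin m → Fin ℓ → Λ) <
      ∑ W, mL (Aset f Pr π W) (Bset f Pr π W) :=
    mul_card_lt_sum_mL_of_lt_gammaM (hthreshold.trans_le hγ)
  obtain ⟨p, hp⟩ := exists_card_le_two_pow_mul_card_filter (fun W _ ↦ hbound W) hsum
  refine ⟨p, {W | 2 ^ p * m < mL (Aset f Pr π W) (Bset f Pr π W)}, ?_, fun W hW ↦ hW⟩
  rw [Set.ncard_eq_toFinset_card', Set.toFinset_ofPred, Real.rpow_neg zero_le_two,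
    Real.rpow_natCast, inv_mul_le_iff₀ (by positivity)]
  exact_mod_cast hp

/-- For every live transcript `π₁` there exist `p ∈ ℕ` and a set of
matrices `𝒲₀ ⊆ Λ^{m×ℓ}` with `|𝒲₀| ≥ 2^{-p}·|Λ|^{m·ℓ}` such that
`mL(𝒜_{π₁,W} × ℬ_{π₁,W}) > 2^p·m` for every `W ∈ 𝒲₀`. -/
theorem initial_set_of_matrices (m ℓ t : ℕ) (O : Type)
    (f : (Fin m → Bool) → Bool) (S : (Fin ℓ → Bool) → O → Prop)
    (gd : (Fin t → Bool) → (Fin t → Bool) → Bool)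
    (hf : Monotone f) (hf1 : ∃ x, f x = true) (hf0 : ∃ x, f x = false)
    (Pr : Protocol
        ((Fin m → Fin ℓ → (Fin t → Bool)) × {a : Fin m → Bool // f a = true})
        ((Fin m → Fin ℓ → (Fin t → Bool)) × {b : Fin m → Bool // f b = false})
        (Fin m × O))
    (hPr : Solves Pr (starLift f S gd))
    (π₁ : List Bool) (hlive : LiveT f Pr π₁) :
    ∃ (p : ℕ) (W0 : Set (Fin m → Fin ℓ → (Fin t → Bool))),
      (2 : ℝ) ^ (-(p : ℝ)) * (Fintype.card (Fin m → Fin ℓ → (Fin t → Bool)) : ℝ) ≤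
        (W0.ncard : ℝ) ∧
      ∀ W ∈ W0, 2 ^ p * m < mL (Aset f Pr π₁ W) (Bset f Pr π₁ W) := by
  obtain ⟨x, hx⟩ := hf1
  obtain ⟨y, hy⟩ := hf0
  have hm : 0 < m := pos_of_apply_ne (by rw [hx, hy]; decide : f x ≠ f y)
  exact initial_set_of_matrices_general hm hf Pr π₁ hlive.2
end

section
/- Let T be a finite binary tree with vertex set V and root r, let γ : V → ℕ be a subadditive measure on T (i.e., γ(v) ≤ γ(v₀) + γ(v₁) for every internal vertex v with children v₀, v₁), and let M ⊆ V be a separating set of T (every path from the root to a leaf passes through a vertex of M). Then there exists a vertex v ∈ M such that γ(v) ≥ γ(r)/|M|. -/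
open Classical

/-! For Statement 10 we model a finite binary tree as an inductive type; vertices are
root-to-vertex paths (lists of bits). -/

inductive BTree : Type where
  | leaf : BTree
  | node : BTree → BTree → BTree

namespace BTree

/-- `v` is a vertex of the tree (a valid root-to-vertex path). -/
def isVertex : BTree → List Bool → Prop
  | _, [] => True
  | .leaf, _ :: _ => False
  | .node l r, b :: rest => if b then isVertex r rest else isVertex l rest

/-- `p` is a root-to-leaf path of the tree. -/
def isLeafPath : BTree → List Bool → Prop
  | .leaf, [] => True
  | .node _ _, [] => False
  | .leaf, _ :: _ => False
  | .node l r, b :: rest => if b then isLeafPath r rest else isLeafPath l rest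

/-- `v` is an internal vertex of the tree. -/
def isInternal : BTree → List Bool → Prop
  | .node _ _, [] => True
  | .leaf, [] => False
  | .leaf, _ :: _ => False
  | .node l r, b :: rest => if b then isInternal r rest else isInternal l rest

end BTree

/-!
Starting from the root, keep replacing a vertex outside `M` by its two children. As `M` separates
the root from the leaves, this stops at distinct vertices of `M`, and subadditivity gives
`γ(root) ≤ ∑ v ∈ M, γ v`; hence some `v ∈ M` is at least the average `γ(root) / |M|`.
-/

namespace BTree

section Branch

variable {α : Type*}

/-- The members of `M` that start with `a`, stripped of that first letter: when `M` is a set of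
vertices, its part in the subtree at the child `a` of the root, addressed from that child. -/
noncomputable def branch (M : Finset (List α)) (a : α) : Finset (List α) :=
  M.preimage (List.cons a) List.cons_injective.injOn

variable {M : Finset (List α)}

theorem mem_branch {a : α} {w : List α} : w ∈ branch M a ↔ a :: w ∈ M :=
  Finset.mem_preimage

theorem sum_sum_branch [Fintype α] {β : Type*} [AddCommMonoid β] (hM : [] ∉ M)
    (f : List α → β) : ∑ a, ∑ w ∈ branch M a, f (a :: w) = ∑ v ∈ M, f v := by
  rw [Finset.sum_sigma']
  refine Finset.sum_nbij (fun x ↦ x.1 :: x.2) ?_ ?_ ?_ fun _ _ ↦ rfl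
  · rintro ⟨a, w⟩ h
    exact mem_branch.mp (Finset.mem_sigma.mp h).2
  · rintro ⟨a, w⟩ - ⟨b, u⟩ - h
    obtain ⟨rfl, rfl⟩ := List.cons.inj h
    rfl
  · rintro (_ | ⟨a, w⟩) hv
    · exact absurd hv hM
    · exact ⟨⟨a, w⟩, by simpa [mem_branch] using hv, rfl⟩

end Branch

theorem exists_isLeafPath : ∀ T : BTree, ∃ p, T.isLeafPath p
  | leaf => ⟨[], trivial⟩
  | node l _ =>
    let ⟨p, hp⟩ := l.exists_isLeafPath
    ⟨false :: p, hp⟩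

/-- `M` is a separating set of `T`: every root-to-leaf path meets `M`. The vertices on a path are
its prefixes. -/
def IsSeparating (T : BTree) (M : Finset (List Bool)) : Prop :=
  ∀ p, T.isLeafPath p → ∃ v ∈ M, v <+: p

/-- `γ` is a subadditive measure on `T`. It is defined on all bit strings, but only its values at
the vertices of `T` are constrained; with `R` in place of `ℕ`, nonnegativity is assumed separately
where it is needed. -/
def IsSubadditive {R : Type*} [Add R] [LE R] (T : BTree) (γ : List Bool → R) : Prop :=
  ∀ v, T.isInternal v → γ v ≤ γ (v ++ [false]) + γ (v ++ [true])

variable {T l r : BTree} {M : Finset (List Bool)}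

theorem IsSeparating.nonempty (hM : T.IsSeparating M) : M.Nonempty :=
  let ⟨p, hp⟩ := T.exists_isLeafPath
  let ⟨v, hv, _⟩ := hM p hp
  ⟨v, hv⟩

theorem IsSeparating.nil_mem_of_leaf (hM : leaf.IsSeparating M) : [] ∈ M := by
  obtain ⟨v, hv, hv_nil⟩ := hM [] trivial
  rwa [List.prefix_nil.mp hv_nil] at hv

theorem IsSeparating.child (hM : (node l r).IsSeparating M) (hroot : [] ∉ M) (b : Bool) :
    (cond b r l).IsSeparating (branch M b) := by
  intro p hp
  obtain ⟨v, hv, hvp⟩ := hM (b :: p) (by cases b <;> exact hp)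
  cases v with
  | nil => exact absurd hv hroot
  | cons c w =>
    obtain ⟨rfl, hwp⟩ := List.cons_prefix_cons.mp hvp
    exact ⟨w, mem_branch.mpr hv, hwp⟩

theorem IsSubadditive.child {R : Type*} [Add R] [LE R] {γ : List Bool → R}
    (hγ : (node l r).IsSubadditive γ) (b : Bool) :
    (cond b r l).IsSubadditive fun v ↦ γ (b :: v) :=
  fun v hv ↦ hγ (b :: v) (by cases b <;> exact hv)

theorem IsSubadditive.root_le_sum {R : Type*} [AddCommMonoid R] [Preorder R]
    [IsOrderedAddMonoid R] {γ : List Bool → R} (hγ : T.IsSubadditive γ)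
    (hM : T.IsSeparating M) (hnonneg : ∀ v ∈ M, 0 ≤ γ v) : γ [] ≤ ∑ v ∈ M, γ v := by
  induction T generalizing γ M with
  | leaf => exact Finset.single_le_sum hnonneg hM.nil_mem_of_leaf
  | node l r ihl ihr =>
    by_cases hroot : [] ∈ M
    · exact Finset.single_le_sum hnonneg hroot
    have hnonneg_branch (b : Bool) : ∀ w ∈ branch M b, 0 ≤ γ (b :: w) :=
      fun w hw ↦ hnonneg (b :: w) (mem_branch.mp hw)
    calc
      γ [] ≤ γ [false] + γ [true] := hγ [] trivial
      _ ≤ ∑ w ∈ branch M false, γ (false :: w) + ∑ w ∈ branch M true, γ (true :: w) :=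
        add_le_add
          (ihl (hγ.child false) (hM.child hroot false) (hnonneg_branch false))
          (ihr (hγ.child true) (hM.child hroot true) (hnonneg_branch true))
      _ = ∑ v ∈ M, γ v := by rw [← sum_sum_branch hroot, Fintype.sum_bool, add_comm]

end BTree

theorem subadditive_measure_on_separating_set_general {K : Type*} [Field K] [LinearOrder K]
    [IsStrictOrderedRing K] {T : BTree} {γ : List Bool → K} {M : Finset (List Bool)}
    (hM : ∀ v ∈ M, T.isVertex v) (hnonneg : ∀ v, T.isVertex v → 0 ≤ γ v)
    (hsub : T.IsSubadditive γ) (hsep : T.IsSeparating M) :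
    ∃ v ∈ M, γ [] / (M.card : K) ≤ γ v := by
  have hcard : (M.card : K) ≠ 0 := Nat.cast_ne_zero.mpr hsep.nonempty.card_ne_zero
  refine Finset.exists_le_of_sum_le hsep.nonempty ?_
  calc
    ∑ _v ∈ M, γ [] / (M.card : K) = γ [] := by
      rw [Finset.sum_const, nsmul_eq_mul, mul_div_cancel₀ _ hcard]
    _ ≤ ∑ v ∈ M, γ v := hsub.root_le_sum hsep fun v hv ↦ hnonneg v (hM v hv)

/-- If `γ` is a subadditive measure on a finite binary tree `T`
and `M` is a separating set of `T`, then some vertex `v ∈ M` has `γ(v) ≥ γ(root)/|M|`. -/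
theorem subadditive_measure_on_separating_set (T : BTree) (γ : List Bool → ℕ)
    (M : Finset (List Bool)) (hM : ∀ v ∈ M, T.isVertex v)
    (hsub : ∀ v : List Bool, T.isInternal v →
      γ v ≤ γ (v ++ [false]) + γ (v ++ [true]))
    (hsep : ∀ p : List Bool, T.isLeafPath p → ∃ v ∈ M, v <+: p) :
    ∃ v ∈ M, (γ [] : ℝ) / (M.card : ℝ) ≤ (γ v : ℝ) := by
  have hsub_cast : T.IsSubadditive fun v ↦ (γ v : ℝ) :=
    fun v hv ↦ (Nat.cast_le.mpr (hsub v hv)).trans_eq (Nat.cast_add _ _)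
  exact subadditive_measure_on_separating_set_general hM (fun v _ ↦ Nat.cast_nonneg (γ v))
    hsub_cast hsep
end

section
/- Let Λ be a finite nonempty set, let U and [ℓ] be finite index sets with ℓ ≥ 1, and let 𝒲' ⊆ Λ^{U×[ℓ]} be a nonempty set of matrices. Suppose that for every set of rows I ⊆ U it holds that rAvgDeg_{I×[ℓ]}(𝒲') ≥ 4^{−|I|}. Then for every set of entries K ⊆ U×[ℓ] it holds that rAvgDeg_K(𝒲') ≥ 4^{−|K|}. -/
open Classical

/-!
Restricting to the coordinates outside `A` instead of outside a larger set `B` multiplies the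
number of projected strings by at most `|Λ| ^ |B \ A|`, which is exactly the change in the
normalisation `|Λ| ^ |I|`; hence the relative average degree is antitone in the coordinate set.
A set of entries `K` is contained in the union of the rows it meets, and it meets at most `|K|`
of them.
-/

section Projections

variable {N Λ : Type} {W : Set (N → Λ)}

theorem ncard_projSet_union_le (hW : W.Finite) (S T : Set N) :
    (projSet W (S ∪ T)).ncard ≤ (projSet W S).ncard * (projSet W T).ncard := by
  rw [← Set.ncard_prod]
  refine Set.ncard_le_ncard_of_injOn
    (fun w => (fun j => w ⟨j, .inl j.2⟩, fun j => w ⟨j, .inr j.2⟩)) ?_ ?_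
    ((hW.image _).prod (hW.image _))
  · rintro _ ⟨w, hw, rfl⟩
    exact ⟨⟨w, hw, rfl⟩, ⟨w, hw, rfl⟩⟩
  · intro w _ w' _ h
    obtain ⟨hS, hT⟩ := Prod.mk.inj h
    funext ⟨j, hj⟩
    rcases hj with hj | hj
    · exact congrFun hS ⟨j, hj⟩
    · exact congrFun hT ⟨j, hj⟩

variable [Fintype Λ]

theorem natCard_fun_eq_card_pow_ncard {T : Set N} (hT : T.Finite) :
    Nat.card (T → Λ) = Fintype.card Λ ^ T.ncard := by
  have := hT.to_subtype
  rw [Nat.card_fun, Nat.card_eq_fintype_card, Nat.card_coe_set_eq]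

theorem ncard_projSet_le_card_pow_ncard (W : Set (N → Λ)) {T : Set N} (hT : T.Finite) :
    (projSet W T).ncard ≤ Fintype.card Λ ^ T.ncard := by
  have := hT.to_subtype
  exact (Set.ncard_le_card _).trans_eq (natCard_fun_eq_card_pow_ncard hT)

theorem ncard_projSet_compl_mul_card_pow_le (hW : W.Finite) {A B : Set N} (hB : B.Finite)
    (hAB : A ⊆ B) :
    (projSet W Aᶜ).ncard * Fintype.card Λ ^ A.ncard ≤
      (projSet W Bᶜ).ncard * Fintype.card Λ ^ B.ncard := by
  have hcompl : Aᶜ = Bᶜ ∪ B \ A := by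
    rw [← compl_sdiff_compl, Set.union_sdiff_cancel (Set.compl_subset_compl.2 hAB)]
  calc (projSet W Aᶜ).ncard * Fintype.card Λ ^ A.ncard
      ≤ (projSet W Bᶜ).ncard * (projSet W (B \ A)).ncard * Fintype.card Λ ^ A.ncard := by
        rw [hcompl]
        gcongr
        exact ncard_projSet_union_le hW _ _
    _ ≤ (projSet W Bᶜ).ncard * Fintype.card Λ ^ (B \ A).ncard * Fintype.card Λ ^ A.ncard := by
        gcongr
        exact ncard_projSet_le_card_pow_ncard W hB.sdiff
    _ = (projSet W Bᶜ).ncard * Fintype.card Λ ^ B.ncard := by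
        rw [mul_assoc, ← pow_add, Set.ncard_sdiff_add_ncard_of_subset hAB hB]

theorem rAvgDeg_le_rAvgDeg_of_subset (hfin : W.Finite) (hW : W.Nonempty) {A B : Set N}
    (hB : B.Finite) (hAB : A ⊆ B) : rAvgDeg W B ≤ rAvgDeg W A := by
  have hproj : 0 < (projSet W Aᶜ).ncard := (Set.ncard_pos (hfin.image _)).2 (hW.image _)
  have hpow : 0 < Fintype.card Λ ^ A.ncard := by
    have hA := hB.subset hAB
    have := hA.to_subtype
    have : Nonempty (A → Λ) := hW.elim fun w _ => ⟨fun j => w j⟩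
    exact natCard_fun_eq_card_pow_ncard (Λ := Λ) hA ▸ Nat.card_pos
  rw [rAvgDeg, rAvgDeg, div_div, div_div]
  refine div_le_div_of_nonneg_left (Nat.cast_nonneg _) ?_ ?_
  · exact_mod_cast Nat.mul_pos hproj hpow
  · exact_mod_cast ncard_projSet_compl_mul_card_pow_le hfin hB hAB

end Projections

theorem rows_degree_to_entries_degree_general {N U Λ : Type} [Fintype Λ] {W : Set (N → Λ)}
    (hfin : W.Finite) (hW : W.Nonempty) {row : N → U} (hrow : ∀ u, (row ⁻¹' {u}).Finite)
    {c : ℝ} (hc₀ : 0 ≤ c) (hc₁ : c ≤ 1)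
    (hrows : ∀ I : Set U, I.Finite → c ^ I.ncard ≤ rAvgDeg W (row ⁻¹' I))
    {K : Set N} (hK : K.Finite) : c ^ K.ncard ≤ rAvgDeg W K := by
  have hI : (row '' K).Finite := hK.image row
  calc c ^ K.ncard ≤ c ^ (row '' K).ncard :=
        pow_le_pow_of_le_one hc₀ hc₁ (Set.ncard_image_le hK)
    _ ≤ rAvgDeg W (row ⁻¹' (row '' K)) := hrows _ hI
    _ ≤ rAvgDeg W K :=
        rAvgDeg_le_rAvgDeg_of_subset hfin hW (hI.preimage' fun u _ => hrow u)
          (Set.subset_preimage_image row K)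

/-- If every set of rows `I ⊆ U` satisfies
`rAvgDeg_{I×[ℓ]}(𝒲') ≥ 4^{-|I|}`, then every set of entries `K ⊆ U×[ℓ]` satisfies
`rAvgDeg_K(𝒲') ≥ 4^{-|K|}`. -/
theorem rows_degree_to_entries_degree {U Λ : Type} [Fintype U] [Fintype Λ] [Nonempty Λ]
    (ℓ : ℕ) (hℓ : 1 ≤ ℓ) (W : Set (U × Fin ℓ → Λ)) (hW : W.Nonempty)
    (hrows : ∀ I : Set U,
      ((1 : ℝ) / 4) ^ I.ncard ≤ rAvgDeg W {p : U × Fin ℓ | p.1 ∈ I}) :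
    ∀ K : Set (U × Fin ℓ), ((1 : ℝ) / 4) ^ K.ncard ≤ rAvgDeg W K :=
  fun K => rows_degree_to_entries_degree_general W.toFinite hW (fun _ => Set.toFinite _)
    (by norm_num) (by norm_num) (fun I _ => hrows I) K.toFinite
end
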